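/- arXiv:2208.00103 — 6 statements merged into one kernel-verified Lean document; each statement's English description precedes it below -/
import Mathlib

section
/- Let h be a real number and θ a complex number with |θ| < h. Set s := √(h² − |θ|²) and z₊ := −θ / (h + s). Then |z₊| < 1, and the function f(z) := ( h·|z|² + Re( conj(θ) · z ) ) / ( 1 − |z|² ), defined for complex z with |z| < 1, satisfies: (i) f(z) ≥ −(h − s)/2 for every z with |z| < 1; (ii) f(z₊) = −(h − s)/2; and (iii) if |z| < 1 and z ≠ z₊ then f(z) > −(h − s)/2. -/
open scoped ComplexConjugate

open scoped RealInnerProductSpace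

/-!
With `s = √(h² - ‖θ‖²)`, the point `w = -θ / (h + s)` satisfies `(h + s) ‖w‖² = h - s`, so it
completes the square:
`h ‖z‖² + ⟪θ, z⟫ = -(h - s) / 2 * (1 - ‖z‖²) + (h + s) / 2 * ‖z - w‖²`.
Dividing by `1 - ‖z‖²` exhibits the energy as its minimum plus a positive multiple of
`‖z - w‖²`. Only the real inner product `⟪θ, z⟫ = Re (conj θ * z)` of `ℂ` enters.
-/

section Minimizer

variable {E : Type*} [SeminormedAddCommGroup E] {h : ℝ} {θ : E}

/-- The Bogoliubov quasiparticle energy `s = √(h² - ‖θ‖²)` of the mode, in terms of which the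
minimum of the pair-excitation energy is expressed. -/
noncomputable def quasiparticleEnergy (h : ℝ) (θ : E) : ℝ :=
  √(h ^ 2 - ‖θ‖ ^ 2)

theorem quasiparticleEnergy_nonneg (h : ℝ) (θ : E) : 0 ≤ quasiparticleEnergy h θ :=
  Real.sqrt_nonneg _

theorem quasiparticleEnergy_sq (hθ : ‖θ‖ ≤ |h|) :
    quasiparticleEnergy h θ ^ 2 = h ^ 2 - ‖θ‖ ^ 2 :=
  Real.sq_sqrt <| sub_nonneg.2 <| sq_le_sq.2 <| by rwa [abs_norm]

theorem add_quasiparticleEnergy_pos (hh : 0 < h) (θ : E) : 0 < h + quasiparticleEnergy h θ :=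
  add_pos_of_pos_of_nonneg hh (quasiparticleEnergy_nonneg h θ)

variable [NormedSpace ℝ E]

/-- The minimizer `z₊ = -θ / (h + s)` of the pair-excitation energy in the open unit ball,
for `‖θ‖ < h`. -/
noncomputable def pairMinimizer (h : ℝ) (θ : E) : E :=
  -((h + quasiparticleEnergy h θ)⁻¹ • θ)

theorem norm_pairMinimizer_lt_one (hθ : ‖θ‖ < h) : ‖pairMinimizer h θ‖ < 1 := by
  have hpos : 0 < h + quasiparticleEnergy h θ :=
    add_quasiparticleEnergy_pos ((norm_nonneg θ).trans_lt hθ) θ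
  rw [pairMinimizer, norm_neg, norm_smul, norm_inv, Real.norm_of_nonneg hpos.le,
    inv_mul_lt_one₀ hpos]
  exact hθ.trans_le (le_add_of_nonneg_right (quasiparticleEnergy_nonneg h θ))

end Minimizer

section Energy

variable {E : Type*} [NormedAddCommGroup E] [InnerProductSpace ℝ E] {h : ℝ} {θ z : E}

/-- The single-mode pair-excitation energy `ℰ[z; h, θ]`, with the mode coefficient `z` in any real
inner product space; meaningful only for `‖z‖ ≠ 1`, where the denominator does not vanish. -/
noncomputable def pairEnergy (h : ℝ) (θ z : E) : ℝ :=
  (h * ‖z‖ ^ 2 + ⟪θ, z⟫) / (1 - ‖z‖ ^ 2)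

theorem mul_norm_sq_add_inner_eq_completed_square {s : ℝ} (hs : s ^ 2 = h ^ 2 - ‖θ‖ ^ 2)
    (hne : h + s ≠ 0) (z : E) :
    h * ‖z‖ ^ 2 + ⟪θ, z⟫ =
      -(h - s) / 2 * (1 - ‖z‖ ^ 2) + (h + s) / 2 * ‖z + (h + s)⁻¹ • θ‖ ^ 2 := by
  have expand : ‖z + (h + s)⁻¹ • θ‖ ^ 2 =
      ‖z‖ ^ 2 + 2 * ((h + s)⁻¹ * ⟪θ, z⟫) + (h + s)⁻¹ ^ 2 * ‖θ‖ ^ 2 := by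
    rw [norm_add_sq_real, real_inner_smul_right, real_inner_comm, norm_smul, mul_pow,
      Real.norm_eq_abs, sq_abs]
  have factor : ‖θ‖ ^ 2 = (h + s) * (h - s) := by linear_combination hs
  rw [expand, factor]
  field_simp
  ring

theorem pairEnergy_eq_add_norm_sub_sq (hh : 0 < h) (hθ : ‖θ‖ ≤ h) (hz : ‖z‖ ≠ 1) :
    pairEnergy h θ z = -(h - quasiparticleEnergy h θ) / 2 +
      (h + quasiparticleEnergy h θ) / 2 * ‖z - pairMinimizer h θ‖ ^ 2 / (1 - ‖z‖ ^ 2) := by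
  have hden : 1 - ‖z‖ ^ 2 ≠ 0 :=
    sub_ne_zero.2 <| Ne.symm <| mt (pow_eq_one_iff_of_nonneg (norm_nonneg z) two_ne_zero).1 hz
  rw [pairEnergy, mul_norm_sq_add_inner_eq_completed_square
    (quasiparticleEnergy_sq (hθ.trans (le_abs_self h))) (add_quasiparticleEnergy_pos hh θ).ne',
    add_div, mul_div_cancel_right₀ _ hden, pairMinimizer, sub_neg_eq_add]

theorem pairEnergy_pairMinimizer (hθ : ‖θ‖ < h) :
    pairEnergy h θ (pairMinimizer h θ) = -(h - quasiparticleEnergy h θ) / 2 := by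
  rw [pairEnergy_eq_add_norm_sub_sq ((norm_nonneg θ).trans_lt hθ) hθ.le
    (norm_pairMinimizer_lt_one hθ).ne]
  simp

theorem lt_pairEnergy (hh : 0 < h) (hθ : ‖θ‖ ≤ h) (hz : ‖z‖ < 1) (hne : z ≠ pairMinimizer h θ) :
    -(h - quasiparticleEnergy h θ) / 2 < pairEnergy h θ z := by
  have hsum : 0 < h + quasiparticleEnergy h θ := add_quasiparticleEnergy_pos hh θ
  have hdist : 0 < ‖z - pairMinimizer h θ‖ := norm_sub_pos_iff.2 hne
  have hden : 0 < 1 - ‖z‖ ^ 2 := sub_pos.2 (pow_lt_one₀ (norm_nonneg z) hz two_ne_zero)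
  rw [pairEnergy_eq_add_norm_sub_sq hh hθ hz.ne]
  exact lt_add_of_pos_right _ (by positivity)

end Energy

theorem pairEnergy_complex (h : ℝ) (θ z : ℂ) :
    pairEnergy h θ z = (h * ‖z‖ ^ 2 + (conj θ * z).re) / (1 - ‖z‖ ^ 2) := by
  rw [pairEnergy, Complex.inner, mul_comm z]

theorem pairMinimizer_complex (h : ℝ) (θ : ℂ) :
    pairMinimizer h θ = -θ / (h + quasiparticleEnergy h θ : ℂ) := by
  rw [pairMinimizer, Complex.real_smul, Complex.ofReal_inv, Complex.ofReal_add, neg_div,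
    div_eq_inv_mul]

theorem stmt5_general {E : Type*} [NormedAddCommGroup E] [InnerProductSpace ℝ E] {h : ℝ} {θ : E}
    (hθ : ‖θ‖ < h) :
    ‖pairMinimizer h θ‖ < 1 ∧
    (∀ z : E, ‖z‖ < 1 → -(h - quasiparticleEnergy h θ) / 2 ≤ pairEnergy h θ z) ∧
    pairEnergy h θ (pairMinimizer h θ) = -(h - quasiparticleEnergy h θ) / 2 ∧
    (∀ z : E, ‖z‖ < 1 → z ≠ pairMinimizer h θ →
      -(h - quasiparticleEnergy h θ) / 2 < pairEnergy h θ z) := by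
  have hmin := pairEnergy_pairMinimizer hθ
  have hlt : ∀ z : E, ‖z‖ < 1 → z ≠ pairMinimizer h θ →
      -(h - quasiparticleEnergy h θ) / 2 < pairEnergy h θ z :=
    fun _ => lt_pairEnergy ((norm_nonneg θ).trans_lt hθ) hθ.le
  refine ⟨norm_pairMinimizer_lt_one hθ, fun z hz => ?_, hmin, hlt⟩
  obtain rfl | hne := eq_or_ne z (pairMinimizer h θ)
  · exact hmin.ge
  · exact (hlt z hz hne).le

/-- Single-mode minimization of the pair-excitation energy: for `|θ| < h`,
with `s = √(h² − |θ|²)` and `z₊ = −θ/(h+s)`, one has `|z₊| < 1` and the function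
`f(z) = (h|z|² + Re(θ̄ z))/(1 − |z|²)` on the open unit disc attains its strict global
minimum `−(h−s)/2` exactly at `z₊`. -/
theorem stmt5
    (h : ℝ) (θ : ℂ) (hθ : ‖θ‖ < h)
    (s : ℝ) (hs : s = Real.sqrt (h ^ 2 - ‖θ‖ ^ 2))
    (zp : ℂ) (hzp : zp = -θ / (h + s : ℂ))
    (f : ℂ → ℝ)
    (hf : ∀ z, f z = (h * ‖z‖ ^ 2 + (conj θ * z).re) / (1 - ‖z‖ ^ 2)) :
    ‖zp‖ < 1 ∧
    (∀ z : ℂ, ‖z‖ < 1 → -(h - s) / 2 ≤ f z) ∧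
    f zp = -(h - s) / 2 ∧
    (∀ z : ℂ, ‖z‖ < 1 → z ≠ zp → -(h - s) / 2 < f z) := by
  simpa only [hf, hzp, hs, pairEnergy_complex, pairMinimizer_complex, quasiparticleEnergy]
    using stmt5_general hθ
end

section
/- Let h be a real number, θ a complex number and c > 0 with h − |θ| ≥ c. Set s := √(h² − |θ|²) and z₊ := −θ / (h + s). Then |z₊| < 1 and |z₊| / (1 − |z₊|²) = |θ| / (2s) ≤ |θ| / (2c). -/
/-!
Since `s² + ‖θ‖² = h²`, the number `x = ‖θ‖ / (h + s)` is the tangent of half the angle whose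
tangent is `‖θ‖ / s`, so the double-angle formula `2x / (1 - x²) = ‖θ‖ / s` is the claimed identity.
The bound holds because `s² = (h - ‖θ‖)(h + ‖θ‖) ≥ (h - ‖θ‖)² ≥ c²`.
-/

section HalfAngle

variable {K : Type*} [Field K] {h s t : K}

theorem one_sub_div_add_sq (hs : s ^ 2 = h ^ 2 - t ^ 2) (hne : h + s ≠ 0) :
    1 - (t / (h + s)) ^ 2 = 2 * s / (h + s) := by
  field_simp
  linear_combination -hs

theorem div_add_div_one_sub_sq (hs : s ^ 2 = h ^ 2 - t ^ 2) (hne : h + s ≠ 0) :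
    t / (h + s) / (1 - (t / (h + s)) ^ 2) = t / (2 * s) := by
  rw [one_sub_div_add_sq hs hne, div_div_div_cancel_right₀ hne]

end HalfAngle

theorem sub_le_sqrt_sq_sub_sq {h t : ℝ} (ht : 0 ≤ t) : h - t ≤ √(h ^ 2 - t ^ 2) := by
  rcases le_total h t with hle | hle
  · exact (sub_nonpos.2 hle).trans (Real.sqrt_nonneg _)
  · refine Real.le_sqrt_of_sq_le ?_
    calc (h - t) ^ 2 = (h - t) * (h - t) := sq _
      _ ≤ (h + t) * (h - t) :=
        mul_le_mul_of_nonneg_right (by linarith) (sub_nonneg.2 hle)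
      _ = h ^ 2 - t ^ 2 := (sq_sub_sq h t).symm

theorem norm_inv_smul_neg {E : Type*} [SeminormedAddCommGroup E] [NormedSpace ℝ E]
    {r : ℝ} (hr : 0 ≤ r) (v : E) : ‖r⁻¹ • -v‖ = ‖v‖ / r := by
  rw [norm_smul_of_nonneg (inv_nonneg.2 hr), norm_neg, inv_mul_eq_div]

theorem stmt6_general {E : Type*} [SeminormedAddCommGroup E] [NormedSpace ℝ E]
    (h : ℝ) (θ : E) (c : ℝ) (hc : 0 < c) (hgap : c ≤ h - ‖θ‖)
    (s : ℝ) (hs : s = √(h ^ 2 - ‖θ‖ ^ 2))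
    (zp : E) (hzp : zp = (h + s)⁻¹ • -θ) :
    ‖zp‖ < 1 ∧
    ‖zp‖ / (1 - ‖zp‖ ^ 2) = ‖θ‖ / (2 * s) ∧
    ‖θ‖ / (2 * s) ≤ ‖θ‖ / (2 * c) := by
  have hθ : 0 ≤ ‖θ‖ := norm_nonneg θ
  have hcs : c ≤ s := hs ▸ hgap.trans (sub_le_sqrt_sq_sub_sq hθ)
  have hs_pos : 0 < s := hc.trans_le hcs
  have hs_sq : s ^ 2 = h ^ 2 - ‖θ‖ ^ 2 := by
    rw [hs] at hs_pos ⊢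
    exact Real.sq_sqrt (Real.sqrt_pos.1 hs_pos).le
  have hsum_pos : 0 < h + s := by linarith
  rw [hzp, norm_inv_smul_neg hsum_pos.le]
  refine ⟨?_, div_add_div_one_sub_sq hs_sq hsum_pos.ne', by gcongr⟩
  rw [div_lt_one hsum_pos]
  linarith

/-- Under the gap condition `h − |θ| ≥ c > 0`, the minimizing coefficient
`z₊ = −θ/(h+s)` with `s = √(h² − |θ|²)` satisfies `|z₊| < 1` and
`|z₊|/(1 − |z₊|²) = |θ|/(2s) ≤ |θ|/(2c)`. -/
theorem stmt6
    (h : ℝ) (θ : ℂ) (c : ℝ) (hc : 0 < c) (hgap : c ≤ h - ‖θ‖)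
    (s : ℝ) (hs : s = Real.sqrt (h ^ 2 - ‖θ‖ ^ 2))
    (zp : ℂ) (hzp : zp = -θ / (h + s : ℂ)) :
    ‖zp‖ < 1 ∧
    ‖zp‖ / (1 - ‖zp‖ ^ 2) = ‖θ‖ / (2 * s) ∧
    ‖θ‖ / (2 * s) ≤ ‖θ‖ / (2 * c) :=
  stmt6_general h θ c hc hgap s hs zp (by simp [hzp, div_eq_inv_mul])
end

section
/- Let H be a complex Hilbert space, T : H → H a bounded self-adjoint operator, and A : H → H a bounded operator with ‖A‖ ≤ a for some a ≥ 0. Suppose α and β are real numbers with α, β ∈ spectrum(T), the spectrum of T contains no point z with α < Re z < β, and 2a < β − α. Then for every s ∈ [0,1], the spectrum of T + s·A contains no point z ∈ ℂ with α + a < Re z < β − a. -/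
/-!
The functional calculus bounds the resolvent of a normal element `a` by
`‖(z - a)⁻¹‖ ≤ dist(z, σ(a))⁻¹`. Since `z - (a + b) = (z - a) (1 - (z - a)⁻¹ b)`, a Neumann series
inverts `z - (a + b)` whenever `‖b‖ < dist(z, σ(a))`, so every point of `σ(a + b)` lies within `‖b‖`
of `σ(a)`. Such a point therefore cannot be deeper than `‖b‖` inside a vertical strip that misses
`σ(a)`.
-/

section Perturbation

variable {R A : Type*} [CommSemiring R] [NormedRing A] [HasSummableGeomSeries A] [Algebra R A]

theorem add_mem_resolventSet_of_norm_mul_lt_one {a b : A} {z : R} (hz : z ∈ resolventSet R a)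
    (hb : ‖resolvent a z * b‖ < 1) : z ∈ resolventSet R (a + b) := by
  have hfactor : algebraMap R A z - (a + b) =
      (algebraMap R A z - a) * (1 - resolvent a z * b) := by
    rw [mul_sub, mul_one, resolvent, Ring.mul_inverse_cancel_left _ _ hz, sub_sub]
  rw [spectrum.mem_resolventSet_iff, hfactor]
  exact hz.mul (isUnit_one_sub_of_norm_lt_one hb)

end Perturbation

section Resolvent

variable {R A : Type*} {p : A → Prop} [Field R] [StarRing R] [MetricSpace R]
  [IsTopologicalDivisionRing R] [ContinuousStar R] [TopologicalSpace A] [Ring A] [StarRing A]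
  [Algebra R A] [ContinuousFunctionalCalculus R A p]

theorem resolvent_eq_cfc {a : A} (ha : p a) {z : R} (hz : z ∈ resolventSet R a) :
    resolvent a z = cfc (fun w ↦ (z - w)⁻¹) a := by
  have hne : ∀ w ∈ spectrum R a, z - w ≠ 0 := fun w hw h ↦ hw (sub_eq_zero.mp h ▸ hz)
  rw [cfc_inv (fun w ↦ z - w) a hne, cfc_sub (fun _ ↦ z) (fun w ↦ w) a, cfc_const z a,
    cfc_id' R a, resolvent]

end Resolvent

section IsometricCalculus

open Metric

variable {𝕜 A : Type*} {p : A → Prop} [RCLike 𝕜] [NormedRing A] [StarRing A] [NormedAlgebra 𝕜 A]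
  [IsometricContinuousFunctionalCalculus 𝕜 A p]

theorem norm_resolvent_le_inv_infDist_spectrum {a : A} (ha : p a) (z : 𝕜) :
    ‖resolvent a z‖ ≤ (infDist z (spectrum 𝕜 a))⁻¹ := by
  by_cases hz : z ∈ spectrum 𝕜 a
  · rw [spectrum.resolvent_zero_of_mem_spectrum hz, norm_zero]
    exact inv_nonneg.mpr infDist_nonneg
  have hclosed : IsClosed (spectrum 𝕜 a) :=
    (ContinuousFunctionalCalculus.isCompact_spectrum a).isClosed
  rw [resolvent_eq_cfc ha (Set.notMem_compl_iff.mp hz)]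
  refine norm_cfc_le (inv_nonneg.mpr infDist_nonneg) fun w hw ↦ ?_
  rw [norm_inv, ← dist_eq_norm]
  exact inv_anti₀ ((hclosed.notMem_iff_infDist_pos ⟨w, hw⟩).mp hz) (infDist_le_dist_of_mem hw)

theorem exists_mem_spectrum_dist_le_of_mem_spectrum_add [HasSummableGeomSeries A] {a b : A}
    (ha : p a) {z : 𝕜} (hz : z ∈ spectrum 𝕜 (a + b)) :
    ∃ w ∈ spectrum 𝕜 a, dist z w ≤ ‖b‖ := by
  cases subsingleton_or_nontrivial A
  · simp only [spectrum.of_subsingleton, Set.mem_empty_iff_false] at hz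
  obtain ⟨w, hw, hdist⟩ :=
    (ContinuousFunctionalCalculus.isCompact_spectrum a).exists_infDist_eq_dist
      (ContinuousFunctionalCalculus.spectrum_nonempty a ha) z
  refine ⟨w, hw, hdist ▸ ?_⟩
  by_contra! hlt
  have hpos : 0 < infDist z (spectrum 𝕜 a) := (norm_nonneg b).trans_lt hlt
  have hza : z ∈ resolventSet 𝕜 a := by
    by_contra hz'
    exact hpos.ne' (infDist_zero_of_mem hz')
  refine hz (add_mem_resolventSet_of_norm_mul_lt_one hza ?_)
  calc ‖resolvent a z * b‖ ≤ ‖resolvent a z‖ * ‖b‖ := norm_mul_le _ _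
    _ ≤ (infDist z (spectrum 𝕜 a))⁻¹ * ‖b‖ := by
      gcongr
      exact norm_resolvent_le_inv_infDist_spectrum ha z
    _ < 1 := (inv_mul_lt_one₀ hpos).mpr hlt

end IsometricCalculus

theorem stmt7_general {A : Type*} [CStarAlgebra A] {t b : A} [IsStarNormal t] {a α β : ℝ}
    (hb : ‖b‖ ≤ a) (hgap : ∀ z ∈ spectrum ℂ t, ¬(α < z.re ∧ z.re < β)) :
    ∀ z ∈ spectrum ℂ (t + b), ¬(α + a < z.re ∧ z.re < β - a) := by
  rintro z hz ⟨hα, hβ⟩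
  obtain ⟨w, hw, hzw⟩ := exists_mem_spectrum_dist_le_of_mem_spectrum_add ‹IsStarNormal t› hz
  have hre : |z.re - w.re| ≤ a := by
    calc |z.re - w.re| ≤ ‖z - w‖ := Complex.abs_re_le_norm (z - w)
      _ = dist z w := (dist_eq_norm z w).symm
      _ ≤ a := hzw.trans hb
  obtain ⟨hlower, hupper⟩ := abs_le.mp hre
  exact hgap w hw ⟨by linarith, by linarith⟩

/-- Cuenin–Tretter spectral gap stability. If a bounded self-adjoint
operator `T` on a complex Hilbert space has a spectral gap: `α, β ∈ spectrum(T)` and no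
spectral point has real part in `(α, β)`, and `A` is a bounded perturbation with `‖A‖ ≤ a`
and `2a < β − α`, then for every `s ∈ [0,1]` the spectrum of `T + sA` contains no point
with real part in `(α + a, β − a)`. -/
theorem stmt7
    {H : Type*} [NormedAddCommGroup H] [InnerProductSpace ℂ H] [CompleteSpace H]
    (T A : H →L[ℂ] H) (hT : IsSelfAdjoint T)
    (a : ℝ) (ha : 0 ≤ a) (hA : ‖A‖ ≤ a)
    (α β : ℝ)
    (hα : (α : ℂ) ∈ spectrum ℂ T) (hβ : (β : ℂ) ∈ spectrum ℂ T)
    (hgapT : ∀ z ∈ spectrum ℂ T, ¬(α < z.re ∧ z.re < β))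
    (hgap : 2 * a < β - α) :
    ∀ s : ℝ, s ∈ Set.Icc (0 : ℝ) 1 →
      ∀ z ∈ spectrum ℂ (T + (s : ℂ) • A), ¬(α + a < z.re ∧ z.re < β - a) := by
  intro s hs
  have hT_normal : IsStarNormal T := hT.isStarNormal
  have hs_norm : ‖(s : ℂ)‖ ≤ 1 := (Complex.norm_of_nonneg hs.1).trans_le hs.2
  exact stmt7_general
    ((norm_smul_le _ A).trans ((mul_le_of_le_one_left (norm_nonneg A) hs_norm).trans hA)) hgapT
end

section
/- Let H be a complex Hilbert space with a Hilbert basis (η_i)_{i ∈ ι}, and let k : H → H be a bounded operator with ‖k‖ < 1. Then 1 − k k* is a positive invertible operator; let T denote the positive square root of (1 − k k*)⁻¹, and define u_i := T η_i and p_i := k* u_i. Then for all i, j ∈ ι: ⟪u_i, u_j⟫ − ⟪p_i, p_j⟫ = 1 if i = j, and ⟪u_i, u_j⟫ − ⟪p_i, p_j⟫ = 0 if i ≠ j. -/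
open scoped InnerProductSpace

/-!
With `A = 1 - k k†`, one has `⟪u, v⟫ - ⟪k† u, k† v⟫ = ⟪A u, v⟫`. A square root `T` of `A⁻¹`
satisfies `T A T = 1`, so if it is self-adjoint then `⟪A T x, T y⟫ = ⟪T A T x, y⟫ = ⟪x, y⟫`.
Orthonormality of the `η i` therefore carries over to the pairs `(T (η i), k† (T (η i)))`, with
respect to the indefinite form sending `(u, p)` and `(v, q)` to `⟪u, v⟫ - ⟪p, q⟫`.
-/

theorem mul_mul_eq_one_of_mul_self_eq_ringInverse {M : Type*} [MonoidWithZero M] {a t : M}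
    (ha : IsUnit a) (h : t * t = Ring.inverse a) : t * a * t = 1 := by
  have ht : IsUnit t := ((Commute.refl t).isUnit_mul_iff.mp (h ▸ ha.ringInverse)).1
  refine ht.mul_left_cancel ?_
  calc t * (t * a * t) = t * t * a * t := by simp only [mul_assoc]
    _ = t * 1 := by rw [h, Ring.inverse_mul_cancel a ha, one_mul, mul_one]

section OneSubCompAdjoint

open ContinuousLinearMap
open scoped InnerProduct

variable {𝕜 E F : Type*} [RCLike 𝕜]
  [NormedAddCommGroup E] [InnerProductSpace 𝕜 E] [CompleteSpace E]
  [NormedAddCommGroup F] [InnerProductSpace 𝕜 F] [CompleteSpace F]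

theorem inner_one_sub_comp_adjoint_apply (k : F →L[𝕜] E) (x y : E) :
    ⟪(1 - k ∘L k†) x, y⟫_𝕜 = ⟪x, y⟫_𝕜 - ⟪(k†) x, (k†) y⟫_𝕜 := by
  rw [adjoint_inner_right, sub_apply, one_apply_eq_self, comp_apply, inner_sub_left]

theorem isPositive_one_sub_comp_adjoint {k : F →L[𝕜] E} (hk : ‖k‖ ≤ 1) :
    (1 - k ∘L k†).IsPositive := by
  refine isPositive_def'.mpr ⟨?_, fun x ↦ ?_⟩
  · exact isPositive_one.isSelfAdjoint.sub (isPositive_self_comp_adjoint k).isSelfAdjoint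
  · have contraction : ‖(k†) x‖ ≤ ‖x‖ := by
      simpa only [one_mul] using (k†).le_of_opNorm_le ((adjoint.norm_map k).trans_le hk) x
    rw [reApplyInnerSelf_apply, inner_one_sub_comp_adjoint_apply, map_sub,
      inner_self_eq_norm_sq, inner_self_eq_norm_sq, sub_nonneg]
    gcongr

theorem isUnit_one_sub_comp_adjoint {k : F →L[𝕜] E} (hk : ‖k‖ < 1) :
    IsUnit (1 - k ∘L k†) := by
  refine isUnit_one_sub_of_norm_lt_one ?_
  calc ‖k ∘L k†‖ ≤ ‖k‖ * ‖k†‖ := opNorm_comp_le k (k†)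
    _ = ‖k‖ * ‖k‖ := by rw [adjoint.norm_map]
    _ < 1 := mul_lt_one_of_nonneg_of_lt_one_left (norm_nonneg k) hk hk.le

theorem inner_sub_inner_adjoint_of_comp_self_eq_ringInverse {k : F →L[𝕜] E} {T : E →L[𝕜] E}
    (hk : IsUnit (1 - k ∘L k†)) (hT : IsSelfAdjoint T)
    (hTT : T ∘L T = Ring.inverse (1 - k ∘L k†)) (x y : E) :
    ⟪T x, T y⟫_𝕜 - ⟪(k†) (T x), (k†) (T y)⟫_𝕜 = ⟪x, y⟫_𝕜 := by
  have conj_eq_one : T * (1 - k ∘L k†) * T = 1 :=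
    mul_mul_eq_one_of_mul_self_eq_ringInverse hk hTT
  calc ⟪T x, T y⟫_𝕜 - ⟪(k†) (T x), (k†) (T y)⟫_𝕜
      = ⟪(1 - k ∘L k†) (T x), T y⟫_𝕜 := (inner_one_sub_comp_adjoint_apply k (T x) (T y)).symm
    _ = ⟪(T * (1 - k ∘L k†) * T) x, y⟫_𝕜 := (hT.isSymmetric _ y).symm
    _ = ⟪x, y⟫_𝕜 := by rw [conj_eq_one, one_apply_eq_self]

theorem stmt9_general {ι : Type*} [DecidableEq ι] {η : ι → E} (hη : Orthonormal 𝕜 η)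
    {k : F →L[𝕜] E} (hk : ‖k‖ < 1) :
    ((1 - k ∘L k†).IsPositive ∧ IsUnit (1 - k ∘L k†)) ∧
    ∀ T : E →L[𝕜] E, IsSelfAdjoint T → T ∘L T = Ring.inverse (1 - k ∘L k†) →
      ∀ i j : ι,
        ⟪T (η i), T (η j)⟫_𝕜 - ⟪(k†) (T (η i)), (k†) (T (η j))⟫_𝕜 = if i = j then 1 else 0 := by
  have hunit : IsUnit (1 - k ∘L k†) := isUnit_one_sub_comp_adjoint hk
  refine ⟨⟨isPositive_one_sub_comp_adjoint hk.le, hunit⟩, fun T hT hTT i j ↦ ?_⟩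
  rw [inner_sub_inner_adjoint_of_comp_self_eq_ringInverse hunit hT hTT]
  exact orthonormal_iff_ite.mp hη i j

end OneSubCompAdjoint

/-- Bogoliubov normalization relations. Let `(η i)` be a Hilbert basis of a
complex Hilbert space `H` and `k` a bounded operator with `‖k‖ < 1`. Then `1 − k k*` is
positive and invertible, and for `T` the positive square root of `(1 − k k*)⁻¹`,
`u i := T (η i)` and `p i := k* (u i)`, one has
`⟪u i, u j⟫ − ⟪p i, p j⟫ = δ_{ij}`. -/
theorem stmt9
    {H : Type*} [NormedAddCommGroup H] [InnerProductSpace ℂ H] [CompleteSpace H]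
    {ι : Type*} [DecidableEq ι] (η : HilbertBasis ι ℂ H)
    (k : H →L[ℂ] H) (hk : ‖k‖ < 1) :
    ((1 - k ∘L ContinuousLinearMap.adjoint k).IsPositive ∧
      IsUnit (1 - k ∘L ContinuousLinearMap.adjoint k)) ∧
    ∀ T : H →L[ℂ] H, T.IsPositive →
      T ∘L T = Ring.inverse (1 - k ∘L ContinuousLinearMap.adjoint k) →
      ∀ i j : ι,
        ⟪T (η i), T (η j)⟫_ℂ -
            ⟪(ContinuousLinearMap.adjoint k) (T (η i)),
              (ContinuousLinearMap.adjoint k) (T (η j))⟫_ℂ =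
          if i = j then 1 else 0 := by
  have ⟨hA, hrel⟩ := stmt9_general η.orthonormal hk
  exact ⟨hA, fun T hT ↦ hrel T hT.isSelfAdjoint⟩
end

section
/- Let H be a complex Hilbert space with a Hilbert basis (η_i)_{i ∈ ι}, and let k : H → H be a bounded operator with ‖k‖ < 1. Let T denote the positive square root of the positive invertible operator (1 − k k*)⁻¹, and define u_i := T η_i and p_i := k* u_i. Then for all f, g ∈ H: (i) ∑_{i ∈ ι} ⟪f, u_i⟫ · ⟪p_i, g⟫ = ⟪f, k (1 − k*k)⁻¹ g⟫, and (ii) ∑_{i ∈ ι} ⟪f, p_i⟫ · ⟪p_i, g⟫ = ⟪f, k*k (1 − k*k)⁻¹ g⟫, where both sums converge unconditionally (as tsum over ι). -/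
open scoped InnerProductSpace

/-!
Expanding in the Hilbert basis, a sum `∑ ⟪f, A (η i)⟫ ⟪B (η i), g⟫` is `⟪f, A B* g⟫` by Parseval.
For `A = T`, `B = k* T` the operator is `T T* k = (1 - k k*)⁻¹ k`, and for `A = B = k* T` it is
`k* (1 - k k*)⁻¹ k`. The push-through identity `(1 - k k*)⁻¹ k = k (1 - k* k)⁻¹` then moves the
inverse to the right of `k`.
-/

section PushThrough

variable {R M N : Type*} [Ring R]
  [AddCommGroup M] [Module R M] [TopologicalSpace M] [IsTopologicalAddGroup M]
  [AddCommGroup N] [Module R N] [TopologicalSpace N] [IsTopologicalAddGroup N]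

theorem comp_one_sub_comp (A : M →L[R] N) (B : N →L[R] M) :
    A ∘L (1 - B ∘L A) = (1 - A ∘L B) ∘L A := by
  ext x
  simp

theorem isUnit_one_sub_comp_swap {A : M →L[R] N} {B : N →L[R] M} (h : IsUnit (1 - A ∘L B)) :
    IsUnit (1 - B ∘L A) := by
  -- The witness sums the formal Neumann series: `∑ (B A)ⁿ = 1 + B (∑ (A B)ⁿ) A`.
  let W : M →L[R] M := 1 + B ∘L Ring.inverse (1 - A ∘L B) ∘L A
  have right_inv : (1 - B ∘L A) * W = 1 := by
    calc (1 - B ∘L A) * W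
        = (1 - B ∘L A) + ((1 - B ∘L A) ∘L B) ∘L Ring.inverse (1 - A ∘L B) ∘L A := by
          rw [mul_add, mul_one]; rfl
      _ = (1 - B ∘L A) + B ∘L ((1 - A ∘L B) * Ring.inverse (1 - A ∘L B)) ∘L A := by
          rw [← comp_one_sub_comp]; rfl
      _ = 1 := by
          rw [Ring.mul_inverse_cancel _ h]; exact sub_add_cancel _ _
  have left_inv : W * (1 - B ∘L A) = 1 := by
    calc W * (1 - B ∘L A)
        = (1 - B ∘L A) + B ∘L Ring.inverse (1 - A ∘L B) ∘L (A ∘L (1 - B ∘L A)) := by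
          rw [add_mul, one_mul]; rfl
      _ = (1 - B ∘L A) + B ∘L (Ring.inverse (1 - A ∘L B) * (1 - A ∘L B)) ∘L A := by
          rw [comp_one_sub_comp]; rfl
      _ = 1 := by
          rw [Ring.inverse_mul_cancel _ h]; exact sub_add_cancel _ _
  exact ⟨⟨1 - B ∘L A, W, right_inv, left_inv⟩, rfl⟩

theorem inverse_one_sub_comp_comp {A : M →L[R] N} {B : N →L[R] M} (h : IsUnit (1 - A ∘L B)) :
    Ring.inverse (1 - A ∘L B) ∘L A = A ∘L Ring.inverse (1 - B ∘L A) := by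
  have h_swap : IsUnit (1 - B ∘L A) := isUnit_one_sub_comp_swap h
  calc Ring.inverse (1 - A ∘L B) ∘L A
      = Ring.inverse (1 - A ∘L B) ∘L A ∘L ((1 - B ∘L A) * Ring.inverse (1 - B ∘L A)) := by
        rw [Ring.mul_inverse_cancel _ h_swap]; rfl
    _ = Ring.inverse (1 - A ∘L B) ∘L (A ∘L (1 - B ∘L A)) ∘L Ring.inverse (1 - B ∘L A) := rfl
    _ = (Ring.inverse (1 - A ∘L B) * (1 - A ∘L B)) ∘L A ∘L Ring.inverse (1 - B ∘L A) := by
        rw [comp_one_sub_comp]; rfl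
    _ = A ∘L Ring.inverse (1 - B ∘L A) := by
        rw [Ring.inverse_mul_cancel _ h]; rfl

end PushThrough

section Hilbert

open ContinuousLinearMap

variable {𝕜 E F G ι : Type*} [RCLike 𝕜]
  [NormedAddCommGroup E] [InnerProductSpace 𝕜 E] [CompleteSpace E]
  [NormedAddCommGroup F] [InnerProductSpace 𝕜 F] [CompleteSpace F]
  [NormedAddCommGroup G] [InnerProductSpace 𝕜 G] [CompleteSpace G]

theorem isUnit_one_sub_comp_adjoint_of_norm_lt_one {k : E →L[𝕜] F} (hk : ‖k‖ < 1) :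
    IsUnit (1 - k ∘L adjoint k) := by
  apply isUnit_one_sub_of_norm_lt_one
  calc ‖k ∘L adjoint k‖ ≤ ‖k‖ * ‖adjoint k‖ := opNorm_comp_le _ _
    _ = ‖k‖ * ‖k‖ := by rw [LinearIsometryEquiv.norm_map]
    _ < 1 := mul_lt_one_of_nonneg_of_lt_one_left (norm_nonneg k) hk hk.le

theorem hasSum_inner_apply_mul_inner_apply (η : HilbertBasis ι 𝕜 G) (A : G →L[𝕜] E)
    (B : G →L[𝕜] F) (f : E) (g : F) :
    HasSum (fun i => ⟪f, A (η i)⟫_𝕜 * ⟪B (η i), g⟫_𝕜) ⟪f, (A ∘L adjoint B) g⟫_𝕜 := by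
  rw [comp_apply, ← adjoint_inner_left]
  simpa only [adjoint_inner_left, adjoint_inner_right] using
    η.hasSum_inner_mul_inner (adjoint A f) (adjoint B g)

theorem stmt10_general (η : HilbertBasis ι 𝕜 G) (k : E →L[𝕜] F)
    (hk : IsUnit (1 - k ∘L adjoint k)) (T : G →L[𝕜] F)
    (hT : T ∘L adjoint T = Ring.inverse (1 - k ∘L adjoint k))
    (u : ι → F) (p : ι → E) (hu : ∀ i, u i = T (η i)) (hp : ∀ i, p i = adjoint k (u i)) :
    (∀ (f : F) (g : E), HasSum (fun i => ⟪f, u i⟫_𝕜 * ⟪p i, g⟫_𝕜)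
      ⟪f, (k ∘L Ring.inverse (1 - adjoint k ∘L k)) g⟫_𝕜) ∧
    ∀ f g : E, HasSum (fun i => ⟪f, p i⟫_𝕜 * ⟪p i, g⟫_𝕜)
      ⟪f, ((adjoint k ∘L k) ∘L Ring.inverse (1 - adjoint k ∘L k)) g⟫_𝕜 := by
  obtain rfl : u = fun i => T (η i) := funext hu
  obtain rfl : p = fun i => (adjoint k ∘L T) (η i) := funext hp
  have anomalous : T ∘L adjoint (adjoint k ∘L T) = k ∘L Ring.inverse (1 - adjoint k ∘L k) := by
    rw [adjoint_comp, adjoint_adjoint, ← comp_assoc, hT, inverse_one_sub_comp_comp hk]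
  have normal : (adjoint k ∘L T) ∘L adjoint (adjoint k ∘L T) =
      (adjoint k ∘L k) ∘L Ring.inverse (1 - adjoint k ∘L k) := by
    rw [comp_assoc, anomalous, comp_assoc]
  rw [← anomalous, ← normal]
  exact ⟨hasSum_inner_apply_mul_inner_apply η T (adjoint k ∘L T),
    hasSum_inner_apply_mul_inner_apply η (adjoint k ∘L T) (adjoint k ∘L T)⟩

end Hilbert

/-- pair-correlation formulas. With `(η i)` a Hilbert basis, `‖k‖ < 1`,
`T` the positive square root of `(1 − k k*)⁻¹`, `u i := T (η i)` and `p i := k* (u i)`,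
the sums `∑ ⟪f, u i⟫ ⟪p i, g⟫` and `∑ ⟪f, p i⟫ ⟪p i, g⟫` converge unconditionally to
`⟪f, k (1 − k*k)⁻¹ g⟫` and `⟪f, k*k (1 − k*k)⁻¹ g⟫` respectively. -/
theorem stmt10
    {H : Type*} [NormedAddCommGroup H] [InnerProductSpace ℂ H] [CompleteSpace H]
    {ι : Type*} (η : HilbertBasis ι ℂ H)
    (k : H →L[ℂ] H) (hk : ‖k‖ < 1)
    (T : H →L[ℂ] H) (hT : T.IsPositive)
    (hT2 : T ∘L T = Ring.inverse (1 - k ∘L ContinuousLinearMap.adjoint k))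
    (u p : ι → H)
    (hu : ∀ i, u i = T (η i))
    (hp : ∀ i, p i = (ContinuousLinearMap.adjoint k) (u i)) :
    ∀ f g : H,
      HasSum (fun i : ι => ⟪f, u i⟫_ℂ * ⟪p i, g⟫_ℂ)
        ⟪f, (k ∘L Ring.inverse (1 - ContinuousLinearMap.adjoint k ∘L k)) g⟫_ℂ ∧
      HasSum (fun i : ι => ⟪f, p i⟫_ℂ * ⟪p i, g⟫_ℂ)
        ⟪f, ((ContinuousLinearMap.adjoint k ∘L k) ∘L
          Ring.inverse (1 - ContinuousLinearMap.adjoint k ∘L k)) g⟫_ℂ := by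
  obtain ⟨anomalous, normal⟩ := stmt10_general η k (isUnit_one_sub_comp_adjoint_of_norm_lt_one hk)
    T (by rwa [hT.isSelfAdjoint.adjoint_eq]) u p hu hp
  exact fun f g => ⟨anomalous f g, normal f g⟩
end

section
/- Let R be a unital (not necessarily commutative) ring and let h₁, h₂, t₁, t₂, k₁, k₂ ∈ R satisfy the pair of Riccati equations h₁ k₁ + k₁ h₂ + t₁ + k₁ t₂ k₁ = 0 and h₂ k₂ + k₂ h₁ + t₂ + k₂ t₁ k₂ = 0. Define the 2×2 block matrices over R: W := [[1, k₁], [k₂, 1]], M := [[h₁, −t₁], [t₂, −h₂]], and D := [[h₁ + k₁ t₂, 0], [0, −(h₂ + k₂ t₁)]]. Then W · M = D · W. In particular, if W is invertible then W M W⁻¹ equals the block-diagonal matrix D. -/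
/-!
The difference `W M - D W` has zero diagonal, whatever `k₁` and `k₂` are, and its off-diagonal
entries are, up to sign, the left-hand sides of the two Riccati equations. These equations thus say
exactly that `W` intertwines `M` and `D`, and a right inverse of `W` turns this relation into
`W M W⁻¹ = D`.
-/

namespace Bogoliubov

variable {R : Type*} [Ring R]

/-- The left-hand side of the Riccati equation for a pair-excitation kernel `k`. The conjugate
equation is obtained by exchanging the indices `1` and `2`. -/
def riccati (h₁ h₂ t₁ t₂ k : R) : R :=
  h₁ * k + k * h₂ + t₁ + k * t₂ * k

/-- The Bogoliubov rotation `W`, without the usual normalization of its rows. -/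
def rotation (k₁ k₂ : R) : Matrix (Fin 2) (Fin 2) R :=
  !![1, k₁; k₂, 1]

/-- The block matrix `M` of the quadratic Hamiltonian with one-particle part `h₁`, `h₂` and pairing
part `t₁`, `t₂`. -/
def hamiltonian (h₁ h₂ t₁ t₂ : R) : Matrix (Fin 2) (Fin 2) R :=
  !![h₁, -t₁; t₂, -h₂]

/-- The block-diagonal quasiparticle Hamiltonian `D`. -/
def quasiparticle (h₁ h₂ t₁ t₂ k₁ k₂ : R) : Matrix (Fin 2) (Fin 2) R :=
  !![h₁ + k₁ * t₂, 0; 0, -(h₂ + k₂ * t₁)]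

theorem rotation_mul_hamiltonian_sub_quasiparticle_mul_rotation (h₁ h₂ t₁ t₂ k₁ k₂ : R) :
    rotation k₁ k₂ * hamiltonian h₁ h₂ t₁ t₂ -
        quasiparticle h₁ h₂ t₁ t₂ k₁ k₂ * rotation k₁ k₂ =
      !![0, -riccati h₁ h₂ t₁ t₂ k₁; riccati h₂ h₁ t₂ t₁ k₂, 0] := by
  have upper_right : -t₁ + -(k₁ * h₂) - (h₁ + k₁ * t₂) * k₁ = -riccati h₁ h₂ t₁ t₂ k₁ := by
    unfold riccati
    noncomm_ring
  have lower_left : k₂ * h₁ + t₂ - -((h₂ + k₂ * t₁) * k₂) = riccati h₂ h₁ t₂ t₁ k₂ := by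
    unfold riccati
    noncomm_ring
  have lower_right : -(k₂ * t₁) + -h₂ - -(h₂ + k₂ * t₁) = 0 := by
    noncomm_ring
  simp [rotation, hamiltonian, quasiparticle, -neg_add_rev, upper_right, lower_left,
    lower_right]

theorem semiconjBy_rotation_iff (h₁ h₂ t₁ t₂ k₁ k₂ : R) :
    SemiconjBy (rotation k₁ k₂) (hamiltonian h₁ h₂ t₁ t₂) (quasiparticle h₁ h₂ t₁ t₂ k₁ k₂) ↔
      riccati h₁ h₂ t₁ t₂ k₁ = 0 ∧ riccati h₂ h₁ t₂ t₁ k₂ = 0 := by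
  rw [SemiconjBy, ← sub_eq_zero, rotation_mul_hamiltonian_sub_quasiparticle_mul_rotation,
    ← Matrix.ext_iff]
  simp [Fin.forall_fin_two]

end Bogoliubov

open Bogoliubov in
theorem stmt13_general {R : Type*} [Ring R] {h₁ h₂ t₁ t₂ k₁ k₂ : R}
    (hk₁ : riccati h₁ h₂ t₁ t₂ k₁ = 0) (hk₂ : riccati h₂ h₁ t₂ t₁ k₂ = 0) :
    SemiconjBy (rotation k₁ k₂) (hamiltonian h₁ h₂ t₁ t₂) (quasiparticle h₁ h₂ t₁ t₂ k₁ k₂) ∧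
      ∀ V : Matrix (Fin 2) (Fin 2) R, rotation k₁ k₂ * V = 1 →
        rotation k₁ k₂ * hamiltonian h₁ h₂ t₁ t₂ * V = quasiparticle h₁ h₂ t₁ t₂ k₁ k₂ := by
  have intertwines := (semiconjBy_rotation_iff h₁ h₂ t₁ t₂ k₁ k₂).mpr ⟨hk₁, hk₂⟩
  exact ⟨intertwines, fun V hV => by rw [intertwines.eq, mul_assoc, hV, mul_one]⟩

/-- algebraic core of the Bogoliubov diagonalization. In any unital ring,
if `h₁ k₁ + k₁ h₂ + t₁ + k₁ t₂ k₁ = 0` and `h₂ k₂ + k₂ h₁ + t₂ + k₂ t₁ k₂ = 0`, then with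
`W = [[1, k₁], [k₂, 1]]`, `M = [[h₁, −t₁], [t₂, −h₂]]` and
`D = [[h₁ + k₁ t₂, 0], [0, −(h₂ + k₂ t₁)]]` one has `W M = D W`; in particular if `W` has a
two-sided inverse `Winv` then `W M Winv = D`. -/
theorem stmt13
    {R : Type*} [Ring R] (h₁ h₂ t₁ t₂ k₁ k₂ : R)
    (hric1 : h₁ * k₁ + k₁ * h₂ + t₁ + k₁ * t₂ * k₁ = 0)
    (hric2 : h₂ * k₂ + k₂ * h₁ + t₂ + k₂ * t₁ * k₂ = 0) :
    (!![1, k₁; k₂, 1] : Matrix (Fin 2) (Fin 2) R) * !![h₁, -t₁; t₂, -h₂] =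
        !![h₁ + k₁ * t₂, 0; 0, -(h₂ + k₂ * t₁)] * !![1, k₁; k₂, 1] ∧
    ∀ Winv : Matrix (Fin 2) (Fin 2) R,
      (!![1, k₁; k₂, 1] : Matrix (Fin 2) (Fin 2) R) * Winv = 1 →
      Winv * !![1, k₁; k₂, 1] = 1 →
      (!![1, k₁; k₂, 1] : Matrix (Fin 2) (Fin 2) R) * !![h₁, -t₁; t₂, -h₂] * Winv =
        !![h₁ + k₁ * t₂, 0; 0, -(h₂ + k₂ * t₁)] := by
  have ⟨intertwines, conj⟩ := stmt13_general hric1 hric2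
  exact ⟨intertwines, fun Winv hr _ => conj Winv hr⟩
end
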